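/- arXiv:1611.02929 — 2 statements merged into one kernel-verified Lean document; each statement's English description precedes it below -/
import Mathlib

section
/- Let f be a valid partition with offset array O, and let n_p = |f(p)| be the number of local trees of process p. Then n_p = |O[p+1]| − k_p; equivalently, n_p = |O[p+1]| − O[p] if O[p] ≥ 0, and n_p = |O[p+1]| − |O[p] + 1| if O[p] < 0. Here k_p is the (extended) first tree index of process p. -/
/-!
The proof rests on one auxiliary quantity: `coverEnd f p`, the least number exceeding every
tree owned by some process of rank `< p`. In a valid partition `|O[p]| = coverEnd f p` for all
`p ≤ P` (`abs_offset`): if `p = P` this says that all `K` trees are owned; if `f p = ∅` it holds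
because the last trees of the nonempty processes do not decrease with the rank; if the first
tree `k_p` is already owned by a smaller rank, the ordering of the processes makes it the largest
tree seen so far, and `|-k_p - 1| = k_p + 1`; otherwise no smaller rank reaches `k_p`, and
since every tree below `k_p` is owned by someone, while no rank `≥ p` owns such a tree,
the smaller ranks exhaust exactly `{0, …, k_p - 1}`. On the other hand, `f p` is an interval from
`k_p` to `coverEnd f (p + 1) - 1`, so its cardinality is `coverEnd f (p + 1) - k_p`.
-/

open Classical

/-- A partition of the `K` trees `{0, …, K-1}` among the `P` processes `{0, …, P-1}`:
each process `p` gets a finite set `f p ⊆ {0, …, K-1}` of trees, the union of all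
the `f p` is `{0, …, K-1}`, and non-processes (`p ≥ P`) carry no trees. -/
def IsPartition (K P : ℕ) (f : ℕ → Finset ℕ) : Prop :=
  (∀ p, f p ⊆ Finset.range K) ∧
  (∀ p, P ≤ p → f p = ∅) ∧
  (Finset.range P).biUnion f = Finset.range K

/-- A valid partition: a partition such that (i) each nonempty `f p` is a consecutive
range `{k_p, …, K_p}`, (ii) for `p < q` (both nonempty) `K_p ≤ k_q`, and (iii) for
`p ≠ q` the overlap `f p ∩ f q` is contained in `{k_p, K_p}`. -/
def IsValid (K P : ℕ) (f : ℕ → Finset ℕ) : Prop :=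
  IsPartition K P f ∧
  (∀ p (h : (f p).Nonempty), f p = Finset.Icc ((f p).min' h) ((f p).max' h)) ∧
  (∀ p q, p < q → ∀ (hp : (f p).Nonempty) (hq : (f q).Nonempty),
      (f p).max' hp ≤ (f q).min' hq) ∧
  (∀ p q, p ≠ q → ∀ (hp : (f p).Nonempty),
      f p ∩ f q ⊆ {(f p).min' hp, (f p).max' hp})

/-- The extended first tree index `k_p` (an integer): `min (f p)` if `f p` is nonempty;
otherwise `K_q + 1` for the maximal `q < p` with `f q` nonempty, or `0` if there is no
such `q`. -/
noncomputable def kExt (f : ℕ → Finset ℕ) (p : ℕ) : ℤ :=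
  if h : (f p).Nonempty then ((f p).min' h : ℤ)
  else if hQ : ((Finset.range p).filter fun q => (f q).Nonempty).Nonempty then
    have hq : (f (((Finset.range p).filter fun q => (f q).Nonempty).max' hQ)).Nonempty :=
      (Finset.mem_filter.mp (Finset.max'_mem _ hQ)).2
    ((f (((Finset.range p).filter fun q => (f q).Nonempty).max' hQ)).max' hq : ℤ) + 1
  else 0

/-- The extended last tree index `K_p` (an integer): `max (f p)` if `f p` is nonempty;
otherwise `K_q` for the maximal `q < p` with `f q` nonempty, or `-1` if there is no
such `q`. -/
noncomputable def KExt (f : ℕ → Finset ℕ) (p : ℕ) : ℤ :=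
  if h : (f p).Nonempty then ((f p).max' h : ℤ)
  else if hQ : ((Finset.range p).filter fun q => (f q).Nonempty).Nonempty then
    have hq : (f (((Finset.range p).filter fun q => (f q).Nonempty).max' hQ)).Nonempty :=
      (Finset.mem_filter.mp (Finset.max'_mem _ hQ)).2
    ((f (((Finset.range p).filter fun q => (f q).Nonempty).max' hQ)).max' hq : ℤ)
  else -1

/-- The offset array `O` of a (valid) partition `f`, of length `P + 1`:
`O[P] = K`, and for `p < P`, `O[p] = k_p` if `f p = ∅` or the first local tree `k_p`
of `p` is not a local tree of any smaller rank, and `O[p] = -k_p - 1` otherwise. -/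
noncomputable def offset (K P : ℕ) (f : ℕ → Finset ℕ) (p : ℕ) : ℤ :=
  if p = P then (K : ℤ)
  else if ∀ (h : (f p).Nonempty), ∀ r < p, (f p).min' h ∉ f r then kExt f p
  else -(kExt f p) - 1

/-- The sending paradigm: given the old partition `f`, the process that sends tree `k`
to process `q` is `q` itself if `k` is already a local tree of `q`, and otherwise
the minimal process `p` with `k ∈ f p`. -/
noncomputable def sender (f : ℕ → Finset ℕ) (q k : ℕ) : ℕ :=
  if k ∈ f q then q else sInf {p | k ∈ f p}

/-- `S_p`: the set of processes `q` such that `p` is the sender of some tree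
`k ∈ f' q` (where `f` is the old and `f'` the new partition). -/
def SendSet (f f' : ℕ → Finset ℕ) (p : ℕ) : Set ℕ :=
  {q | ∃ k ∈ f' q, sender f q k = p}

/-- `R_p`: the set of processes `q` such that `q` is the sender of some tree
`k ∈ f' p` (where `f` is the old and `f'` the new partition). -/
def RecvSet (f f' : ℕ → Finset ℕ) (p : ℕ) : Set ℕ :=
  {q | ∃ k ∈ f' p, sender f p k = q}

/-- The least natural number exceeding every tree owned by a process of rank `< p`
(`0` if there is none). -/
def coverEnd (f : ℕ → Finset ℕ) (p : ℕ) : ℕ :=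
  (Finset.range p).sup fun q => (f q).sup Nat.succ

lemma coverEnd_le_iff {f : ℕ → Finset ℕ} {p c : ℕ} :
    coverEnd f p ≤ c ↔ ∀ q < p, ∀ x ∈ f q, x < c := by
  simp [coverEnd, Finset.sup_le_iff]

lemma lt_coverEnd {f : ℕ → Finset ℕ} {p q x : ℕ} (hq : q < p) (hx : x ∈ f q) :
    x < coverEnd f p :=
  coverEnd_le_iff.1 le_rfl q hq x hx

/-- Condition (ii) of validity in terms of elements. -/
lemma IsValid.le_of_lt {K P : ℕ} {f : ℕ → Finset ℕ} (hf : IsValid K P f) {p q x y : ℕ}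
    (hpq : p < q) (hx : x ∈ f p) (hy : y ∈ f q) : x ≤ y :=
  ((f p).le_max' x hx).trans
    ((hf.2.2.1 p q hpq ⟨x, hx⟩ ⟨y, hy⟩).trans ((f q).min'_le y hy))

lemma coverEnd_last {K P : ℕ} {f : ℕ → Finset ℕ} (hf : IsValid K P f) :
    coverEnd f P = K := by
  apply le_antisymm
  · exact coverEnd_le_iff.2 fun q _ x hx => Finset.mem_range.1 (hf.1.1 q hx)
  · by_contra! h
    have hm : coverEnd f P ∈ (Finset.range P).biUnion f := by
      rw [hf.1.2.2]; exact Finset.mem_range.2 h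
    obtain ⟨q, hq, hx⟩ := Finset.mem_biUnion.1 hm
    exact lt_irrefl _ (lt_coverEnd (Finset.mem_range.1 hq) hx)

lemma kExt_of_nonempty {f : ℕ → Finset ℕ} {p : ℕ} (h : (f p).Nonempty) :
    kExt f p = ((f p).min' h : ℤ) := by
  rw [kExt, dif_pos h]

lemma kExt_of_empty {K P : ℕ} {f : ℕ → Finset ℕ} (hf : IsValid K P f) {p : ℕ}
    (h : ¬ (f p).Nonempty) : kExt f p = coverEnd f p := by
  rw [kExt, dif_neg h]
  split_ifs with hQ
  · have key : ∀ m < p, ∀ hm : (f m).Nonempty, (∀ q < p, (f q).Nonempty → q ≤ m) →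
        ((f m).max' hm : ℤ) + 1 = coverEnd f p := by
      intro m hmp hm hmax
      have hle := lt_coverEnd hmp ((f m).max'_mem hm)
      have hge : coverEnd f p ≤ (f m).max' hm + 1 := by
        refine coverEnd_le_iff.2 fun q hq x hx => Nat.lt_succ_of_le ?_
        rcases (hmax q hq ⟨x, hx⟩).eq_or_lt with rfl | hlt
        · exact Finset.le_max' _ _ hx
        · exact hf.le_of_lt hlt hx (Finset.max'_mem _ _)
      omega
    have hmem := Finset.mem_filter.1 (Finset.max'_mem _ hQ)
    exact key _ (Finset.mem_range.1 hmem.1) hmem.2 fun q hq hn =>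
      Finset.le_max' _ _ (Finset.mem_filter.2 ⟨Finset.mem_range.2 hq, hn⟩)
  · have : coverEnd f p ≤ 0 := coverEnd_le_iff.2 fun q hq x hx =>
      (hQ ⟨q, Finset.mem_filter.2 ⟨Finset.mem_range.2 hq, ⟨x, hx⟩⟩⟩).elim
    omega

lemma kExt_nonneg {K P : ℕ} {f : ℕ → Finset ℕ} (hf : IsValid K P f) (p : ℕ) :
    0 ≤ kExt f p := by
  by_cases h : (f p).Nonempty
  · rw [kExt_of_nonempty h]; positivity
  · rw [kExt_of_empty hf h]; positivity

/-- If the first tree of `p` is new, the smaller ranks own exactly the trees before it. -/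
lemma coverEnd_of_new {K P : ℕ} {f : ℕ → Finset ℕ} (hf : IsValid K P f) {p : ℕ}
    (h : (f p).Nonempty) (hnew : ∀ r < p, (f p).min' h ∉ f r) :
    coverEnd f p = (f p).min' h := by
  have hmin := (f p).min'_mem h
  apply le_antisymm
  · refine coverEnd_le_iff.2 fun q hq x hx => ?_
    refine lt_of_le_of_ne (hf.le_of_lt hq hx hmin) ?_
    rintro rfl
    exact hnew q hq hx
  · by_contra! hlt
    have hm : coverEnd f p ∈ (Finset.range P).biUnion f := by
      rw [hf.1.2.2]
      exact Finset.mem_range.2 (hlt.trans (Finset.mem_range.1 (hf.1.1 p hmin)))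
    obtain ⟨q, -, hx⟩ := Finset.mem_biUnion.1 hm
    rcases lt_trichotomy q p with hq | rfl | hq
    · exact lt_irrefl _ (lt_coverEnd hq hx)
    · exact absurd ((f q).min'_le _ hx) (not_le.2 hlt)
    · exact absurd (hf.le_of_lt hq hmin hx) (not_le.2 hlt)

/-- If the first tree of `p` is shared with a smaller rank, it is the last tree owned by the
smaller ranks. -/
lemma coverEnd_of_shared {K P : ℕ} {f : ℕ → Finset ℕ} (hf : IsValid K P f) {p r : ℕ}
    (h : (f p).Nonempty) (hr : r < p) (hmem : (f p).min' h ∈ f r) :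
    coverEnd f p = (f p).min' h + 1 :=
  le_antisymm
    (coverEnd_le_iff.2 fun _ hq _ hx =>
      Nat.lt_succ_of_le (hf.le_of_lt hq hx ((f p).min'_mem h)))
    (lt_coverEnd hr hmem)

lemma abs_offset {K P : ℕ} {f : ℕ → Finset ℕ} (hf : IsValid K P f) (p : ℕ) :
    |offset K P f p| = coverEnd f p := by
  rw [offset]
  split_ifs with hp hnew
  · rw [hp, coverEnd_last hf, Nat.abs_cast]
  · rw [abs_of_nonneg (kExt_nonneg hf p)]
    by_cases h : (f p).Nonempty
    · rw [kExt_of_nonempty h, coverEnd_of_new hf h (hnew h)]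
    · exact kExt_of_empty hf h
  · push Not at hnew
    obtain ⟨h, r, hr, hmem⟩ := hnew
    rw [kExt_of_nonempty h, coverEnd_of_shared hf h hr hmem, abs_of_neg (by omega)]
    push_cast
    ring

lemma card_eq {K P : ℕ} {f : ℕ → Finset ℕ} (hf : IsValid K P f) (p : ℕ) :
    ((f p).card : ℤ) = coverEnd f (p + 1) - kExt f p := by
  by_cases h : (f p).Nonempty
  · have hcard := congrArg Finset.card (hf.2.1 p h)
    rw [Nat.card_Icc] at hcard
    have hmax := (f p).max'_mem h
    have hle : (f p).min' h ≤ (f p).max' h := (f p).min'_le _ hmax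
    have hlt := lt_coverEnd (Nat.lt_add_one p) hmax
    have hge : coverEnd f (p + 1) ≤ (f p).max' h + 1 := by
      refine coverEnd_le_iff.2 fun q hq x hx => Nat.lt_succ_of_le ?_
      rcases (Nat.lt_succ_iff.1 hq).eq_or_lt with rfl | hlt
      · exact Finset.le_max' _ _ hx
      · exact hf.le_of_lt hlt hx hmax
    rw [kExt_of_nonempty h]
    omega
  · have he : f p = ∅ := Finset.not_nonempty_iff_eq_empty.1 h
    have hstep : coverEnd f (p + 1) = coverEnd f p := by
      simp [coverEnd, Finset.range_add_one, he]
    rw [kExt_of_empty hf h, hstep, he]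
    simp

/-- Corollary: the number of local trees from the offset array.
For a valid partition `f` with offset array `O` and every process `p < P`, the number
`n_p = |f p|` of local trees satisfies `n_p = |O[p+1]| - k_p`; equivalently
`n_p = |O[p+1]| - O[p]` if `O[p] ≥ 0` and `n_p = |O[p+1]| - |O[p] + 1|` if `O[p] < 0`. -/
theorem num_local_trees_from_offset (K P : ℕ) (hK : 1 ≤ K) (hP : 1 ≤ P)
    (f : ℕ → Finset ℕ) (hf : IsValid K P f) (p : ℕ) (hp : p < P) :
    ((f p).card : ℤ) = |offset K P f (p + 1)| - kExt f p ∧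
    (0 ≤ offset K P f p →
      ((f p).card : ℤ) = |offset K P f (p + 1)| - offset K P f p) ∧
    (offset K P f p < 0 →
      ((f p).card : ℤ) = |offset K P f (p + 1)| - |offset K P f p + 1|) := by
  have hcard : ((f p).card : ℤ) = |offset K P f (p + 1)| - kExt f p := by
    rw [abs_offset hf, card_eq hf]
  have hk := kExt_nonneg hf p
  -- The sign of `O[p]` reveals which branch of its definition applies, as `k_p ≥ 0`.
  have hO : offset K P f p = kExt f p ∨ offset K P f p = -(kExt f p) - 1 := by
    rw [offset, if_neg hp.ne]
    split_ifs
    · exact Or.inl rfl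
    · exact Or.inr rfl
  refine ⟨hcard, fun h0 => ?_, fun h0 => ?_⟩
  · have : offset K P f p = kExt f p := by omega
    rw [this, hcard]
  · have : offset K P f p + 1 = -(kExt f p) := by omega
    rw [this, abs_neg, abs_of_nonneg hk, hcard]
end

section
/- Characterization of the last receiving partner: let f (old) and f' (new) be valid partitions of the same K trees among the same P processes, let p be a process with f'(p) ≠ ∅, and let K'_p = max f'(p). Then R_p is nonempty and max R_p = p if K'_p ∈ f(p), while max R_p = min{ q | K'_p ∈ f(q) } otherwise. In words: the biggest rank p receives trees from is the smallest rank that had p's new last tree as a local tree in the old partition, or p itself if this tree was already local on p. -/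
/-!
The right-hand side is `sender f p K'` for the new last tree `K' = max (f' p)`, so the claim is that
this element of `R_p` is its largest one. The ordering condition of a valid partition makes any
choice of owners monotone: a process owning a tree `k` never has larger rank than a process owning a
tree `k' > k` (`IsValid.le_of_mem_of_mem`). As a sender always owns the tree it sends
(`IsValid.mem_sender`), the sender of any `k < K'` has rank at most that of the sender of `K'`.
-/

open Classical

theorem IsValid.le_of_mem_of_mem {K P : ℕ} {f : ℕ → Finset ℕ} (hf : IsValid K P f)
    {q r k k' : ℕ} (hk : k ∈ f q) (hk' : k' ∈ f r) (hlt : k < k') : q ≤ r := by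
  by_contra! hrq
  have h := hf.2.2.1 r q hrq ⟨k', hk'⟩ ⟨k, hk⟩
  have h₁ := (f r).le_max' k' hk'
  have h₂ := (f q).min'_le k hk
  omega

theorem IsValid.mem_sender {K P : ℕ} {f : ℕ → Finset ℕ} (hf : IsValid K P f)
    (q : ℕ) {k : ℕ} (hk : k < K) : k ∈ f (sender f q k) := by
  unfold sender
  split_ifs with h
  · exact h
  · have hcover : k ∈ (Finset.range P).biUnion f := by
      rw [hf.1.2.2]
      exact Finset.mem_range.mpr hk
    obtain ⟨r, -, hr⟩ := Finset.mem_biUnion.mp hcover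
    exact Nat.sInf_mem (s := {p | k ∈ f p}) ⟨r, hr⟩

/-- characterization of the last receiving partner `r_last`.
Let `f` (old) and `f'` (new) be valid partitions, and let `p` be a process with
`f' p ≠ ∅` and new last tree `K'_p = max (f' p)`. Then `R_p` is nonempty, and
`max R_p = p` if `K'_p ∈ f p`, while `max R_p = min {q | K'_p ∈ f q}` otherwise. -/
theorem last_receive_partner (K P : ℕ) (hK : 1 ≤ K) (hP : 1 ≤ P)
    (f f' : ℕ → Finset ℕ) (hf : IsValid K P f) (hf' : IsValid K P f')
    (p : ℕ) (hp : p < P) (hne : (f' p).Nonempty) :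
    (RecvSet f f' p).Nonempty ∧
    sSup (RecvSet f f' p) =
      (if (f' p).max' hne ∈ f p then p else sInf {q | (f' p).max' hne ∈ f q}) := by
  have hlt : ∀ k ∈ f' p, k < K := fun k hk => Finset.mem_range.mp (hf'.1.1 p hk)
  have hmax := (f' p).max'_mem hne
  have hgreatest : IsGreatest (RecvSet f f' p) (sender f p ((f' p).max' hne)) := by
    refine ⟨⟨_, hmax, rfl⟩, ?_⟩
    rintro _ ⟨k, hk, rfl⟩
    rcases ((f' p).le_max' k hk).eq_or_lt with h | h
    · rw [← h]
    · exact hf.le_of_mem_of_mem (hf.mem_sender p (hlt k hk)) (hf.mem_sender p (hlt _ hmax)) h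
  exact ⟨hgreatest.nonempty, hgreatest.csSup_eq⟩
end
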